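/- arXiv:1611.06699 — 2 statements merged into one kernel-verified Lean document; each statement's English description precedes it below -/
import Mathlib

section
/- Let θ > 0. For every integer n ≥ 1, ∑_{j=1}^n Ψ_n(j)/j = ∑_{j=1}^n 1/(θ + j − 1). -/
open Finset

/-- `Ψ_n(j) = ∏_{i=0}^{j−1} (n−i)/(θ+n−1−i)`. -/
noncomputable def Psi (θ : ℝ) (n j : ℕ) : ℝ :=
  ∏ i ∈ Finset.range j, ((n : ℝ) - i) / (θ + (n : ℝ) - 1 - i)

/-!
For `j ≥ 1`, the recurrences expressing `Ψ_{n+1}(j)` and `Ψ_n(j)` through `Ψ_n(j-1)` combine into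
`Ψ_{n+1}(j)/j - Ψ_n(j)/j = (Ψ_n(j-1) - Ψ_n(j))/(θ+n)`. Summed over `1 ≤ j ≤ n + 1`, the right-hand
side telescopes to `1/(θ+n)`, since `Ψ_n(0) = 1` and `Ψ_n(n+1) = 0`; the theorem follows by
induction on `n`.
-/

section Recurrences

variable {θ : ℝ} {n k : ℕ}

theorem Psi_zero_right (θ : ℝ) (n : ℕ) : Psi θ n 0 = 1 :=
  prod_range_zero _

theorem Psi_succ_right (θ : ℝ) (n k : ℕ) :
    Psi θ n (k + 1) = Psi θ n k * ((n - k) / (θ + n - 1 - k)) :=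
  prod_range_succ _ k

theorem Psi_succ_succ (θ : ℝ) (n k : ℕ) :
    Psi θ (n + 1) (k + 1) = (n + 1) / (θ + n) * Psi θ n k := by
  have hfactor (i : ℕ) : (((n + 1 : ℕ) : ℝ) - (i + 1 : ℕ)) / (θ + (n + 1 : ℕ) - 1 - (i + 1 : ℕ))
      = (n - i) / (θ + n - 1 - i) := by
    push_cast
    congr 1 <;> ring
  have hhead : (((n + 1 : ℕ) : ℝ) - (0 : ℕ)) / (θ + (n + 1 : ℕ) - 1 - (0 : ℕ))
      = (n + 1) / (θ + n) := by
    push_cast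
    congr 1 <;> ring
  simp only [Psi, prod_range_succ', hfactor, hhead, mul_comm]

theorem Psi_eq_zero_of_lt (θ : ℝ) (h : n < k) : Psi θ n k = 0 :=
  prod_eq_zero (mem_range.mpr h) (by rw [sub_self, zero_div])

theorem mul_Psi_succ_right (hden : k < n → θ + n - 1 - k ≠ 0) :
    (θ + n - 1 - k) * Psi θ n (k + 1) = (n - k) * Psi θ n k := by
  obtain hkn | rfl | hnk := lt_trichotomy k n
  · have := hden hkn
    rw [Psi_succ_right]
    field_simp
  · rw [Psi_eq_zero_of_lt θ k.lt_succ_self, sub_self, mul_zero, zero_mul]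
  · rw [Psi_eq_zero_of_lt θ hnk, Psi_eq_zero_of_lt θ (hnk.trans k.lt_succ_self), mul_zero, mul_zero]

end Recurrences

section Telescoping

variable {θ : ℝ} {n : ℕ}

theorem Psi_succ_left_div_sub_Psi_div {k : ℕ} (hn : θ + n ≠ 0)
    (hden : k < n → θ + n - 1 - k ≠ 0) :
    Psi θ (n + 1) (k + 1) / (k + 1 : ℕ) - Psi θ n (k + 1) / (k + 1 : ℕ)
      = (Psi θ n k - Psi θ n (k + 1)) / (θ + n) := by
  rw [Psi_succ_succ]
  push_cast
  field_simp
  linear_combination -mul_Psi_succ_right hden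

theorem sum_Psi_succ_left_div_sub (hθ : ∀ i < n + 1, θ + (i : ℝ) ≠ 0) :
    ∑ j ∈ Icc 1 (n + 1), (Psi θ (n + 1) j / j - Psi θ n j / j) = 1 / (θ + n) := by
  have hden (k : ℕ) (hk : k < n) : θ + n - 1 - k ≠ 0 := by
    convert hθ (n - (k + 1)) (by omega) using 1
    push_cast [Nat.cast_sub hk]
    ring
  calc ∑ j ∈ Icc 1 (n + 1), (Psi θ (n + 1) j / j - Psi θ n j / j)
      = ∑ k ∈ range (n + 1),
          (Psi θ (n + 1) (k + 1) / (k + 1 : ℕ) - Psi θ n (k + 1) / (k + 1 : ℕ)) := by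
        rw [range_eq_Ico,
          sum_Ico_add' (fun j : ℕ => Psi θ (n + 1) j / j - Psi θ n j / j) 0 (n + 1) 1]
        rfl
    _ = ∑ k ∈ range (n + 1), (Psi θ n k - Psi θ n (k + 1)) / (θ + n) :=
        sum_congr rfl fun k _ => Psi_succ_left_div_sub_Psi_div (hθ n n.lt_succ_self) (hden k)
    _ = (Psi θ n 0 - Psi θ n (n + 1)) / (θ + n) := by
        rw [← sum_div, sum_range_sub']
    _ = 1 / (θ + n) := by
        rw [Psi_zero_right, Psi_eq_zero_of_lt θ n.lt_succ_self, sub_zero]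

theorem sum_Psi_succ_left_div (hθ : ∀ i < n + 1, θ + (i : ℝ) ≠ 0) :
    ∑ j ∈ Icc 1 (n + 1), Psi θ (n + 1) j / j = ∑ j ∈ Icc 1 n, Psi θ n j / j + 1 / (θ + n) := by
  have hextend : ∑ j ∈ Icc 1 (n + 1), Psi θ n j / j = ∑ j ∈ Icc 1 n, Psi θ n j / j := by
    rw [sum_Icc_succ_top (by omega), Psi_eq_zero_of_lt θ n.lt_succ_self, zero_div, add_zero]
  rw [← sub_eq_iff_eq_add', ← hextend, ← sum_sub_distrib, sum_Psi_succ_left_div_sub hθ]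

end Telescoping

theorem stmt_4_general (θ : ℝ) (n : ℕ) (hθ : ∀ i < n, θ + (i : ℝ) ≠ 0) :
    ∑ j ∈ Icc 1 n, Psi θ n j / (j : ℝ) = ∑ j ∈ Icc 1 n, 1 / (θ + (j : ℝ) - 1) := by
  induction n with
  | zero => simp
  | succ n ih =>
    rw [sum_Psi_succ_left_div hθ, ih fun i hi => hθ i (hi.trans n.lt_succ_self),
      sum_Icc_succ_top (by omega), Nat.cast_add_one, ← add_assoc, add_sub_cancel_right]

/-- For every `n ≥ 1`, `∑_{j=1}^n Ψ_n(j)/j = ∑_{j=1}^n 1/(θ+j−1)`. -/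
theorem stmt_4 (θ : ℝ) (hθ : 0 < θ) (n : ℕ) (hn : 1 ≤ n) :
    ∑ j ∈ Finset.Icc 1 n, Psi θ n j / (j : ℝ)
      = ∑ j ∈ Finset.Icc 1 n, 1 / (θ + (j : ℝ) - 1) :=
  stmt_4_general θ n fun i _ => by positivity
end

section
/- Let θ > 0 and let (δ_N)_{N≥1} be a sequence of real numbers in (0,1] such that δ_N → 0 and Nδ_N → +∞ as N → ∞. Then ∑_{j=1}^N (Ψ_N(j)/j) {jδ_N}(1 − {jδ_N}) is asymptotically equivalent to (1/6) log(Nδ_N) as N → ∞; that is, the ratio of the sum to log(Nδ_N) tends to 1/6. -/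
open Filter Finset

/-!
For a `1`-periodic Lipschitz function `f` vanishing at `0`, the terms of `∑ f(jδ)/j` with `jδ < 1`
contribute `O(1)`. Over the others, write `m` for the mean of `f` and `H = log(Nδ) + O(1)` for the
sum of `1/j`: the constant `m` contributes `m H`, while `f - m` has a bounded primitive `F`, so that
`δ (f(jδ) - m) = F((j+1)δ) - F(jδ) + O(δ²)` and Abel summation leaves `O(1) + O(δ H)`.

The weights `Ψ_N(j)` change the sum by `O(1)` only: they satisfy the telescoping identity
`θ ∑_{i ≤ j} Ψ_N(i) = N - (N - j) Ψ_N(j)`, which controls `|Ψ_N(j) - 1| / j` by `O(Ψ_N(j) + 1) / N`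
and, at `j = N`, the sum of these bounds. The limit is therefore `m`, and `∫₀¹ x(1-x) dx = 1/6`.
-/

open scoped NNReal Topology

section AbelSummation

variable {E : Type*} [NormedAddCommGroup E] [NormedSpace ℝ E]

lemma norm_sum_Ico_smul_sub_le {a : ℕ → E} {w : ℕ → ℝ} {A : ℝ} {m n : ℕ}
    (ha : ∀ j, ‖a j‖ ≤ A) (hw₀ : ∀ j, 0 ≤ w j) (hw : AntitoneOn w (Set.Ici m)) (hmn : m ≤ n) :
    ‖∑ j ∈ Ico m n, w j • (a (j + 1) - a j)‖ ≤ 2 * A * w m := by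
  have norm_smul_le (c : ℝ) (hc : 0 ≤ c) (j : ℕ) : ‖c • a j‖ ≤ A * c := by
    rw [norm_smul, Real.norm_of_nonneg hc, mul_comm]
    gcongr
    exact ha j
  have boundary_removed :
      ‖∑ j ∈ Ico m n, w j • (a (j + 1) - a j) - w n • a n‖ ≤ A * (2 * w m - w n) := by
    induction n, hmn using Nat.le_induction with
    | base =>
      rw [Ico_self, sum_empty, zero_sub, norm_neg]
      exact (norm_smul_le _ (hw₀ m) m).trans_eq (by ring)
    | succ k hk ih =>
      have w_succ_le : w (k + 1) ≤ w k := hw hk (Set.mem_Ici.2 (hk.trans k.le_succ)) k.le_succ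
      calc ‖∑ j ∈ Ico m (k + 1), w j • (a (j + 1) - a j) - w (k + 1) • a (k + 1)‖
          = ‖(∑ j ∈ Ico m k, w j • (a (j + 1) - a j) - w k • a k)
              + (w k - w (k + 1)) • a (k + 1)‖ := by
            rw [sum_Ico_succ_top hk]
            congr 1
            module
        _ ≤ A * (2 * w m - w k) + A * (w k - w (k + 1)) :=
            norm_add_le_of_le ih (norm_smul_le _ (sub_nonneg.2 w_succ_le) _)
        _ = A * (2 * w m - w (k + 1)) := by ring
  calc ‖∑ j ∈ Ico m n, w j • (a (j + 1) - a j)‖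
      = ‖(∑ j ∈ Ico m n, w j • (a (j + 1) - a j) - w n • a n) + w n • a n‖ := by
        rw [sub_add_cancel]
    _ ≤ A * (2 * w m - w n) + A * w n :=
        norm_add_le_of_le boundary_removed (norm_smul_le _ (hw₀ n) n)
    _ = 2 * A * w m := by ring

end AbelSummation

section HarmonicSums

lemma log_div_le_sum_Icc_inv {m n : ℕ} (hm : 0 < m) (hmn : m ≤ n) :
    Real.log (n / m) ≤ ∑ j ∈ Icc m n, (j : ℝ)⁻¹ := by
  have hm' : (0 : ℝ) < m := Nat.cast_pos.2 hm
  have hn' : (0 : ℝ) < n := Nat.cast_pos.2 (hm.trans_le hmn)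
  rw [← integral_inv_of_pos hm' hn']
  refine ((inv_antitoneOn_Icc_right hm').integral_le_sum_Ico hmn).trans ?_
  exact sum_le_sum_of_subset_of_nonneg Ico_subset_Icc_self fun _ _ _ ↦ by positivity

lemma sum_Icc_inv_le_log_div_add_inv {m n : ℕ} (hm : 0 < m) (hmn : m ≤ n) :
    ∑ j ∈ Icc m n, (j : ℝ)⁻¹ ≤ Real.log (n / m) + (m : ℝ)⁻¹ := by
  have hm' : (0 : ℝ) < m := Nat.cast_pos.2 hm
  have hn' : (0 : ℝ) < n := Nat.cast_pos.2 (hm.trans_le hmn)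
  rw [← integral_inv_of_pos hm' hn', ← Ico_add_one_right_eq_Icc,
    sum_eq_sum_Ico_succ_bot (Nat.lt_add_one_of_le hmn), add_comm,
    ← sum_Ico_add' (fun j : ℕ ↦ (j : ℝ)⁻¹)]
  gcongr
  exact (inv_antitoneOn_Icc_right hm').sum_le_integral_Ico hmn

lemma abs_sum_Icc_ceil_inv_sub_log_mul_le_one {d : ℝ} {N : ℕ} (hd : 0 < d) (hd₁ : d ≤ 1)
    (hNd : 1 ≤ N * d) :
    |∑ j ∈ Icc ⌈d⁻¹⌉₊ N, (j : ℝ)⁻¹ - Real.log (N * d)| ≤ 1 := by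
  have hM : 0 < ⌈d⁻¹⌉₊ := Nat.ceil_pos.2 (inv_pos.2 hd)
  have hMN : ⌈d⁻¹⌉₊ ≤ N := Nat.ceil_le.2 ((inv_le_iff_one_le_mul₀ hd).2 hNd)
  have one_le_mul : 1 ≤ ⌈d⁻¹⌉₊ * d := (inv_le_iff_one_le_mul₀ hd).1 (Nat.le_ceil d⁻¹)
  have mul_le_two : ⌈d⁻¹⌉₊ * d ≤ 2 := by
    have := mul_le_mul_of_nonneg_right (Nat.ceil_lt_add_one (inv_pos.2 hd).le).le hd.le
    rw [add_mul, inv_mul_cancel₀ hd.ne'] at this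
    linarith
  have lower := log_div_le_sum_Icc_inv hM hMN
  have upper := sum_Icc_inv_le_log_div_add_inv hM hMN
  generalize ⌈d⁻¹⌉₊ = M at *
  have hM' : (0 : ℝ) < M := Nat.cast_pos.2 hM
  have hN' : (0 : ℝ) < N := Nat.cast_pos.2 (hM.trans_le hMN)
  have log_eq : Real.log (N / M) = Real.log (N * d) - Real.log (M * d) := by
    rw [← Real.log_div (mul_pos hN' hd).ne' (mul_pos hM' hd).ne', mul_div_mul_right _ _ hd.ne']
  have log_nonneg : 0 ≤ Real.log (M * d) := Real.log_nonneg one_le_mul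
  have log_le_one : Real.log (M * d) ≤ 1 := by
    linarith [Real.log_le_sub_one_of_pos (mul_pos hM' hd)]
  have inv_le_one : (M : ℝ)⁻¹ ≤ 1 := inv_le_one_of_one_le₀ (Nat.one_le_cast.2 hM)
  rw [abs_le]
  constructor <;> linarith

end HarmonicSums

section LogarithmicMeans

variable {E : Type*} [NormedAddCommGroup E] [NormedSpace ℝ E] {f : ℝ → E} {K : ℝ≥0} {A d : ℝ}

lemma exists_norm_integral_le_of_periodic {T : ℝ} (hf : Continuous f) (hfT : f.Periodic T)
    (hT : T ≠ 0) (hf₀ : ∫ t in 0..T, f t = 0) : ∃ A, ∀ x, ‖∫ t in 0..x, f t‖ ≤ A := by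
  have hint (a b : ℝ) : IntervalIntegrable f MeasureTheory.volume a b := hf.intervalIntegrable a b
  have primitive_periodic : Function.Periodic (fun x ↦ ∫ t in 0..x, f t) T := fun x ↦ by
    rw [← sub_eq_zero, intervalIntegral.integral_interval_sub_left (hint _ _) (hint _ _),
      hfT.intervalIntegral_add_eq x 0, zero_add, hf₀]
  have hbdd := primitive_periodic.isBounded_of_continuous hT
    (intervalIntegral.continuous_primitive hint 0)
  obtain ⟨A, hA⟩ := hbdd.exists_norm_le
  exact ⟨A, fun x ↦ hA _ ⟨x, rfl⟩⟩

lemma norm_integral_sub_smul_le_of_lipschitzWith [CompleteSpace E] (hf : LipschitzWith K f) (x : ℝ)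
    (hd : 0 ≤ d) : ‖(∫ t in x..x + d, f t) - d • f x‖ ≤ K * d ^ 2 := by
  have norm_sub_le (t : ℝ) (ht : t ∈ Set.uIoc x (x + d)) : ‖f t - f x‖ ≤ K * d := by
    rw [Set.uIoc_of_le (by linarith)] at ht
    refine (hf.norm_sub_le t x).trans ?_
    gcongr
    rw [Real.norm_of_nonneg] <;> linarith [ht.1, ht.2]
  calc ‖(∫ t in x..x + d, f t) - d • f x‖ = ‖∫ t in x..x + d, (f t - f x)‖ := by
        rw [intervalIntegral.integral_sub (hf.continuous.intervalIntegrable _ _)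
          intervalIntegrable_const, intervalIntegral.integral_const, add_sub_cancel_left]
    _ ≤ K * d * |x + d - x| := intervalIntegral.norm_integral_le_of_norm_le_const norm_sub_le
    _ = K * d ^ 2 := by rw [add_sub_cancel_left, abs_of_nonneg hd]; ring

lemma norm_sum_Ico_inv_smul_le_of_primitive_bounded [CompleteSpace E] (hf : LipschitzWith K f)
    (hA : ∀ x, ‖∫ t in 0..x, f t‖ ≤ A) (hd : 0 < d) {m n : ℕ} (hm : 0 < m) (hmn : m ≤ n) :
    ‖∑ j ∈ Ico m n, (j : ℝ)⁻¹ • f (j * d)‖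
      ≤ 2 * A * (m * d)⁻¹ + K * d * ∑ j ∈ Ico m n, (j : ℝ)⁻¹ := by
  set F : ℕ → E := fun j ↦ d⁻¹ • ∫ t in 0..j * d, f t
  have norm_F_le (j : ℕ) : ‖F j‖ ≤ A * d⁻¹ := by
    rw [norm_smul, Real.norm_of_nonneg (inv_pos.2 hd).le, mul_comm]
    gcongr
    exact hA _
  have norm_increment_sub_le (j : ℕ) : ‖F (j + 1) - F j - f (j * d)‖ ≤ K * d := by
    have increment : F (j + 1) - F j - f (j * d)
        = d⁻¹ • ((∫ t in j * d..j * d + d, f t) - d • f (j * d)) := by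
      rw [smul_sub, inv_smul_smul₀ hd.ne', ← smul_sub,
        intervalIntegral.integral_interval_sub_left (hf.continuous.intervalIntegrable _ _)
          (hf.continuous.intervalIntegrable _ _), Nat.cast_succ, add_one_mul]
    rw [increment, norm_smul, Real.norm_of_nonneg (inv_pos.2 hd).le, inv_mul_le_iff₀ hd]
    exact (norm_integral_sub_smul_le_of_lipschitzWith hf _ hd.le).trans_eq (by ring)
  have inv_antitone : AntitoneOn (fun j : ℕ ↦ (j : ℝ)⁻¹) (Set.Ici m) := fun i hi j _ hij ↦
    inv_anti₀ (Nat.cast_pos.2 (hm.trans_le hi)) (Nat.cast_le.2 hij)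
  have summed_by_parts :=
    norm_sum_Ico_smul_sub_le norm_F_le (fun _ ↦ by positivity) inv_antitone hmn
  have remainder_le : ‖∑ j ∈ Ico m n, (j : ℝ)⁻¹ • (F (j + 1) - F j - f (j * d))‖
      ≤ K * d * ∑ j ∈ Ico m n, (j : ℝ)⁻¹ := by
    rw [mul_sum]
    refine norm_sum_le_of_le _ fun j _ ↦ ?_
    rw [norm_smul, norm_inv, Real.norm_natCast, mul_comm]
    gcongr
    exact norm_increment_sub_le j
  calc ‖∑ j ∈ Ico m n, (j : ℝ)⁻¹ • f (j * d)‖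
      = ‖∑ j ∈ Ico m n, (j : ℝ)⁻¹ • (F (j + 1) - F j)
          - ∑ j ∈ Ico m n, (j : ℝ)⁻¹ • (F (j + 1) - F j - f (j * d))‖ := by
        simp only [← sum_sub_distrib, ← smul_sub, sub_sub_cancel]
    _ ≤ 2 * (A * d⁻¹) * (m : ℝ)⁻¹ + K * d * ∑ j ∈ Ico m n, (j : ℝ)⁻¹ :=
        norm_sub_le_of_le summed_by_parts remainder_le
    _ = 2 * A * (m * d)⁻¹ + K * d * ∑ j ∈ Ico m n, (j : ℝ)⁻¹ := by rw [mul_inv]; ring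

lemma norm_sum_Ico_one_ceil_inv_smul_le (hf : LipschitzWith K f) (hf₀ : f 0 = 0) (hd : 0 < d) :
    ‖∑ j ∈ Ico 1 ⌈d⁻¹⌉₊, (j : ℝ)⁻¹ • f (j * d)‖ ≤ K := by
  have norm_term_le (j : ℕ) (hj : j ∈ Ico 1 ⌈d⁻¹⌉₊) : ‖(j : ℝ)⁻¹ • f (j * d)‖ ≤ K * d := by
    have hj₀ : (0 : ℝ) < j := Nat.cast_pos.2 (mem_Ico.1 hj).1
    have norm_le := hf.norm_sub_le (j * d) 0
    rw [hf₀, sub_zero, sub_zero, Real.norm_of_nonneg (by positivity)] at norm_le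
    rw [norm_smul, norm_inv, Real.norm_natCast, inv_mul_le_iff₀ hj₀]
    exact norm_le.trans_eq (by ring)
  have card_mul_le : ((⌈d⁻¹⌉₊ - 1 : ℕ) : ℝ) * d ≤ 1 := by
    rw [Nat.cast_pred (Nat.ceil_pos.2 (inv_pos.2 hd)), ← le_div_iff₀ hd, one_div]
    linarith [Nat.ceil_lt_add_one (inv_pos.2 hd).le]
  calc ‖∑ j ∈ Ico 1 ⌈d⁻¹⌉₊, (j : ℝ)⁻¹ • f (j * d)‖ ≤ ∑ _j ∈ Ico 1 ⌈d⁻¹⌉₊, K * d :=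
        norm_sum_le_of_le _ norm_term_le
    _ = K * (((⌈d⁻¹⌉₊ - 1 : ℕ) : ℝ) * d) := by
        rw [sum_const, Nat.card_Ico, nsmul_eq_mul]; ring
    _ ≤ K := mul_le_of_le_one_right K.2 card_mul_le

theorem norm_sum_Icc_inv_smul_sub_log_smul_le [CompleteSpace E] {m : E} (hf : LipschitzWith K f)
    (hf₀ : f 0 = 0) (hA : ∀ x, ‖∫ t in 0..x, (f t - m)‖ ≤ A) (hd : 0 < d) (hd₁ : d ≤ 1) {N : ℕ}
    (hNd : 1 ≤ N * d) :
    ‖∑ j ∈ Icc 1 N, (j : ℝ)⁻¹ • f (j * d) - Real.log (N * d) • m‖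
      ≤ (2 * K + 2 * A + ‖m‖) + K * d * Real.log (N * d) := by
  have hM : 0 < ⌈d⁻¹⌉₊ := Nat.ceil_pos.2 (inv_pos.2 hd)
  have hMN : ⌈d⁻¹⌉₊ ≤ N := Nat.ceil_le.2 ((inv_le_iff_one_le_mul₀ hd).2 hNd)
  have one_le_mul : 1 ≤ ⌈d⁻¹⌉₊ * d := (inv_le_iff_one_le_mul₀ hd).1 (Nat.le_ceil d⁻¹)
  have harmonic := abs_sum_Icc_ceil_inv_sub_log_mul_le_one hd hd₁ hNd
  have head_le := norm_sum_Ico_one_ceil_inv_smul_le hf hf₀ hd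
  have hfm : LipschitzWith K fun x ↦ f x - m := by
    simpa only [add_zero] using hf.sub (LipschitzWith.const m)
  have tail := norm_sum_Ico_inv_smul_le_of_primitive_bounded hfm hA hd hM
    (Nat.le_add_right_of_le hMN : _ ≤ N + 1)
  rw [Ico_add_one_right_eq_Icc] at tail
  generalize ⌈d⁻¹⌉₊ = M at *
  set L := Real.log (N * d)
  set H := ∑ j ∈ Icc M N, (j : ℝ)⁻¹ with hH
  have hA₀ : 0 ≤ A := (norm_nonneg _).trans (hA 0)
  have decomposition : ∑ j ∈ Icc 1 N, (j : ℝ)⁻¹ • f (j * d) - L • m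
      = ∑ j ∈ Ico 1 M, (j : ℝ)⁻¹ • f (j * d) + ∑ j ∈ Icc M N, (j : ℝ)⁻¹ • (f (j * d) - m)
        + (H - L) • m := by
    rw [← Ico_add_one_right_eq_Icc 1 N,
      ← sum_Ico_consecutive _ hM (Nat.le_add_right_of_le hMN),
      Ico_add_one_right_eq_Icc, sub_smul, hH, sum_smul]
    simp only [smul_sub, sum_sub_distrib]
    abel
  have tail_le : ‖∑ j ∈ Icc M N, (j : ℝ)⁻¹ • (f (j * d) - m)‖ ≤ 2 * A + K * d * (L + 1) := by
    refine tail.trans (add_le_add ?_ ?_)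
    · exact mul_le_of_le_one_right (by positivity) (inv_le_one_of_one_le₀ one_le_mul)
    · gcongr
      linarith [(abs_le.1 harmonic).2]
  have const_le : ‖(H - L) • m‖ ≤ ‖m‖ := by
    rw [norm_smul]
    exact mul_le_of_le_one_left (norm_nonneg m) harmonic
  have Kd_le : K * d ≤ K := mul_le_of_le_one_right K.2 hd₁
  rw [decomposition]
  refine (norm_add_le_of_le (norm_add_le_of_le head_le tail_le) const_le).trans ?_
  linarith

end LogarithmicMeans

section Weights

variable {θ : ℝ} {N i j : ℕ}

lemma Psi_denom_pos (hθ : 0 < θ) (hj : j < N) : 0 < θ + (N : ℝ) - 1 - j := by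
  have : (j : ℝ) + 1 ≤ N := mod_cast hj
  linarith

lemma Psi_factor_nonneg (hθ : 0 < θ) (hj : j < N) :
    0 ≤ ((N : ℝ) - j) / (θ + (N : ℝ) - 1 - j) :=
  div_nonneg (sub_nonneg.2 (Nat.cast_le.2 hj.le)) (Psi_denom_pos hθ hj).le

lemma Psi_nonneg (hθ : 0 < θ) (hj : j ≤ N) : 0 ≤ Psi θ N j :=
  prod_nonneg fun _ hi ↦ Psi_factor_nonneg hθ ((mem_range.1 hi).trans_le hj)

lemma Psi_succ (θ : ℝ) (N j : ℕ) :
    Psi θ N (j + 1) = Psi θ N j * (((N : ℝ) - j) / (θ + N - 1 - j)) :=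
  prod_range_succ _ _

lemma Psi_le_one (hθ : 1 ≤ θ) (hj : j ≤ N) : Psi θ N j ≤ 1 := by
  have hθ₀ : 0 < θ := one_pos.trans_le hθ
  refine prod_le_one (fun i hi ↦ Psi_factor_nonneg hθ₀ ((mem_range.1 hi).trans_le hj)) fun i hi ↦ ?_
  rw [div_le_one (Psi_denom_pos hθ₀ ((mem_range.1 hi).trans_le hj))]
  linarith

lemma Psi_le_Psi (hθ : 0 < θ) (hθ₁ : θ ≤ 1) (hij : i ≤ j) (hj : j ≤ N) :
    Psi θ N i ≤ Psi θ N j := by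
  induction j, hij using Nat.le_induction with
  | base => exact le_rfl
  | succ k _ ih =>
    refine (ih (Nat.le_of_succ_le hj)).trans ?_
    rw [Psi_succ]
    refine le_mul_of_one_le_right (Psi_nonneg hθ (Nat.le_of_succ_le hj)) ?_
    rw [one_le_div (Psi_denom_pos hθ hj)]
    linarith

lemma Psi_le_Psi_add_one (hθ : 0 < θ) (hij : i ≤ j) (hj : j ≤ N) :
    Psi θ N i ≤ Psi θ N j + 1 := by
  rcases le_total 1 θ with hθ₁ | hθ₁
  · linarith [Psi_le_one hθ₁ (hij.trans hj), Psi_nonneg hθ hj]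
  · linarith [Psi_le_Psi hθ hθ₁ hij hj]

lemma mul_sum_Icc_Psi (hθ : 0 < θ) (hj : j ≤ N) :
    θ * ∑ i ∈ Icc 1 j, Psi θ N i = N - Psi θ N j * (N - j) := by
  induction j with
  | zero => simp [Psi]
  | succ k ih =>
    have recurrence : Psi θ N (k + 1) * (θ + N - 1 - k) = Psi θ N k * (N - k) := by
      rw [Psi_succ, mul_assoc, div_mul_cancel₀ _ (Psi_denom_pos hθ hj).ne']
    rw [sum_Icc_succ_top (Nat.le_add_left 1 k), mul_add, ih (Nat.le_of_succ_le hj)]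
    push_cast
    linarith

lemma sum_Icc_Psi (hθ : 0 < θ) (N : ℕ) : ∑ j ∈ Icc 1 N, Psi θ N j = N / θ := by
  rw [eq_div_iff hθ.ne', mul_comm, mul_sum_Icc_Psi hθ le_rfl, sub_self, mul_zero, sub_zero]

lemma abs_Psi_sub_one_div_le (hθ : 0 < θ) (hj₀ : 0 < j) (hj : j ≤ N) :
    |Psi θ N j - 1| / j ≤ ((1 + θ) * Psi θ N j + θ) / N := by
  have hj₀' : (0 : ℝ) < j := Nat.cast_pos.2 hj₀
  have hN' : (0 : ℝ) < N := Nat.cast_pos.2 (hj₀.trans_le hj)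
  have sum_nonneg : 0 ≤ θ * ∑ i ∈ Icc 1 j, Psi θ N i :=
    mul_nonneg hθ.le (sum_nonneg fun i hi ↦ Psi_nonneg hθ ((mem_Icc.1 hi).2.trans hj))
  have sum_le : θ * ∑ i ∈ Icc 1 j, Psi θ N i ≤ θ * (j * (Psi θ N j + 1)) := by
    gcongr
    simpa only [Nat.card_Icc, Nat.add_sub_cancel, nsmul_eq_mul] using
      sum_le_card_nsmul (Icc 1 j) _ _ fun i hi ↦ Psi_le_Psi_add_one hθ (mem_Icc.1 hi).2 hj
  have telescoped : N * (Psi θ N j - 1) = j * Psi θ N j - θ * ∑ i ∈ Icc 1 j, Psi θ N i := by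
    rw [mul_sum_Icc_Psi hθ hj]
    ring
  have scaled : |N * (Psi θ N j - 1)| ≤ j * ((1 + θ) * Psi θ N j + θ) := by
    have hΨ : 0 ≤ j * Psi θ N j := mul_nonneg hj₀'.le (Psi_nonneg hθ hj)
    have hθΨ : 0 ≤ θ * (j * Psi θ N j) := mul_nonneg hθ.le hΨ
    have hθj : 0 ≤ θ * j := by positivity
    rw [telescoped, abs_le]
    constructor <;> linarith [hΨ, hθΨ, hθj]
  rw [abs_mul, abs_of_pos hN'] at scaled
  rw [div_le_div_iff₀ hj₀' hN']
  linarith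

lemma sum_abs_Psi_sub_one_div_le (hθ : 0 < θ) (N : ℕ) :
    ∑ j ∈ Icc 1 N, |Psi θ N j - 1| / j ≤ (1 + θ) / θ + θ := by
  rcases N.eq_zero_or_pos with rfl | hN
  · simpa using by positivity
  have hN' : (N : ℝ) ≠ 0 := Nat.cast_ne_zero.2 hN.ne'
  calc ∑ j ∈ Icc 1 N, |Psi θ N j - 1| / j
      ≤ ∑ j ∈ Icc 1 N, ((1 + θ) * Psi θ N j + θ) / N := sum_le_sum fun j hj ↦
        abs_Psi_sub_one_div_le hθ (mem_Icc.1 hj).1 (mem_Icc.1 hj).2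
    _ = ((1 + θ) * (N / θ) + N * θ) / N := by
        rw [← sum_div, sum_add_distrib, ← mul_sum, sum_Icc_Psi hθ, sum_const, Nat.card_Icc,
          Nat.add_sub_cancel, nsmul_eq_mul]
    _ = (1 + θ) / θ + θ := by field_simp

lemma norm_sum_Psi_div_smul_sub_le {E : Type*} [NormedAddCommGroup E] [NormedSpace ℝ E]
    (hθ : 0 < θ) {c : ℕ → E} {B : ℝ} (hc : ∀ j, ‖c j‖ ≤ B) (N : ℕ) :
    ‖∑ j ∈ Icc 1 N, (Psi θ N j / j) • c j - ∑ j ∈ Icc 1 N, (j : ℝ)⁻¹ • c j‖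
      ≤ ((1 + θ) / θ + θ) * B := by
  have hB : 0 ≤ B := (norm_nonneg _).trans (hc 0)
  calc ‖∑ j ∈ Icc 1 N, (Psi θ N j / j) • c j - ∑ j ∈ Icc 1 N, (j : ℝ)⁻¹ • c j‖
      = ‖∑ j ∈ Icc 1 N, ((Psi θ N j - 1) / j) • c j‖ := by
        simp only [← sum_sub_distrib, ← sub_smul, sub_div, one_div]
    _ ≤ ∑ j ∈ Icc 1 N, |Psi θ N j - 1| / j * B := by
        refine norm_sum_le_of_le _ fun j _ ↦ ?_
        rw [norm_smul, norm_div, Real.norm_natCast, Real.norm_eq_abs]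
        gcongr
        exact hc j
    _ ≤ ((1 + θ) / θ + θ) * B := by
        rw [← sum_mul]
        gcongr
        exact sum_abs_Psi_sub_one_div_le hθ N

end Weights

section FractParabola

lemma lipschitzWith_fract_mul_one_sub_fract :
    LipschitzWith 1 fun x : ℝ ↦ Int.fract x * (1 - Int.fract x) := by
  refine LipschitzWith.of_le_add fun x y ↦ ?_
  have hx₀ := Int.fract_nonneg x
  have hx₁ := Int.fract_lt_one x
  have hy₀ := Int.fract_nonneg y
  have hy₁ := Int.fract_lt_one y
  have value_nonneg : 0 ≤ Int.fract y * (1 - Int.fract y) := mul_nonneg hy₀ (by linarith)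
  have hx := Int.floor_add_fract x
  have hy := Int.floor_add_fract y
  rw [Real.dist_eq]
  rcases lt_trichotomy ⌊x⌋ ⌊y⌋ with hlt | heq | hgt
  · have floor_le : (⌊x⌋ : ℝ) + 1 ≤ ⌊y⌋ := mod_cast hlt
    have value_le : Int.fract x * (1 - Int.fract x) ≤ 1 - Int.fract x :=
      mul_le_of_le_one_left (by linarith) hx₁.le
    linarith [neg_abs_le (x - y)]
  · have sub_eq : x - y = Int.fract x - Int.fract y := by rw [heq] at hx; linarith
    have slope_le : |1 - Int.fract x - Int.fract y| ≤ 1 := by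
      rw [abs_le]; constructor <;> linarith
    have increment_le := (le_abs_self ((x - y) * (1 - Int.fract x - Int.fract y))).trans
      ((abs_mul _ _).trans_le (mul_le_of_le_one_right (abs_nonneg _) slope_le))
    linear_combination increment_le - (1 - Int.fract x - Int.fract y) * sub_eq
  · have floor_le : (⌊y⌋ : ℝ) + 1 ≤ ⌊x⌋ := mod_cast hgt
    have value_le : Int.fract x * (1 - Int.fract x) ≤ Int.fract x :=
      mul_le_of_le_one_right hx₀ (by linarith)
    linarith [le_abs_self (x - y)]

lemma integral_fract_mul_one_sub_fract :
    ∫ x in (0 : ℝ)..1, Int.fract x * (1 - Int.fract x) = 1 / 6 := by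
  have eq_parabola : Set.EqOn (fun x : ℝ ↦ Int.fract x * (1 - Int.fract x))
      (fun x ↦ x - x ^ 2) (Set.uIcc 0 1) := fun x hx ↦ by
    rw [Set.uIcc_of_le zero_le_one] at hx
    rcases hx.2.eq_or_lt with rfl | hx₁
    · simp
    · simp only [Int.fract_eq_self.2 ⟨hx.1, hx₁⟩]
      ring
  rw [intervalIntegral.integral_congr eq_parabola, intervalIntegral.integral_sub
    intervalIntegral.intervalIntegrable_id (intervalIntegral.intervalIntegrable_pow 2),
    integral_id, integral_pow]
  norm_num

end FractParabola

theorem stmt_11_general {E : Type*} [NormedAddCommGroup E] [NormedSpace ℝ E] [CompleteSpace E]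
    {θ : ℝ} (hθ : 0 < θ) {f : ℝ → E} {K : ℝ≥0} (hf : LipschitzWith K f) (hf₁ : f.Periodic 1)
    (hf₀ : f 0 = 0) {δ : ℕ → ℝ} (hδ : Tendsto δ atTop (𝓝 0))
    (hNδ : Tendsto (fun N : ℕ ↦ (N : ℝ) * δ N) atTop atTop) :
    Tendsto
      (fun N : ℕ ↦
        (Real.log (N * δ N))⁻¹ • ∑ j ∈ Icc 1 N, (Psi θ N j / (j : ℝ)) • f (j * δ N))
      atTop (𝓝 (∫ x in 0..1, f x)) := by
  set m := ∫ x in 0..1, f x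
  have hL : Tendsto (fun N : ℕ ↦ Real.log (N * δ N)) atTop atTop :=
    Real.tendsto_log_atTop.comp hNδ
  have integral_sub_mean : ∫ x in 0..1, (f x - m) = 0 := by
    rw [intervalIntegral.integral_sub (hf.continuous.intervalIntegrable 0 1)
      intervalIntegrable_const, intervalIntegral.integral_const, sub_zero, one_smul, sub_self]
  obtain ⟨A, hA⟩ := exists_norm_integral_le_of_periodic (hf.continuous.sub continuous_const)
    (hf₁.sub fun _ ↦ rfl) one_ne_zero integral_sub_mean
  obtain ⟨B, hB⟩ := (hf₁.isBounded_of_continuous one_ne_zero hf.continuous).exists_norm_le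
  set C := ((1 + θ) / θ + θ) * B + (2 * K + 2 * A + ‖m‖)
  have error_tendsto : Tendsto (fun N : ℕ ↦ C / Real.log (N * δ N) + K * δ N) atTop (𝓝 0) := by
    simpa using (hL.const_div_atTop C).add (hδ.const_mul (K : ℝ))
  rw [tendsto_iff_norm_sub_tendsto_zero]
  refine squeeze_zero' (.of_forall fun _ ↦ norm_nonneg _) ?_ error_tendsto
  filter_upwards [hNδ.eventually_ge_atTop 1, hL.eventually_gt_atTop 0, hδ.eventually_le_const
    one_pos] with N hNδ₁ hlog hδ₁
  have hδ₀ : 0 < δ N := pos_of_mul_pos_right (one_pos.trans_le hNδ₁) N.cast_nonneg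
  have weights := norm_sum_Psi_div_smul_sub_le hθ (fun j : ℕ ↦ hB _ ⟨j * δ N, rfl⟩) N
  have unweighted := norm_sum_Icc_inv_smul_sub_log_smul_le hf hf₀ hA hδ₀ hδ₁ hNδ₁
  set S := ∑ j ∈ Icc 1 N, (Psi θ N j / (j : ℝ)) • f (j * δ N)
  set L := Real.log (N * δ N)
  calc ‖L⁻¹ • S - m‖ = L⁻¹ * ‖S - L • m‖ := by
        rw [← norm_smul_of_nonneg (inv_pos.2 hlog).le, smul_sub, inv_smul_smul₀ hlog.ne']
    _ ≤ L⁻¹ * (C + K * δ N * L) := by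
        gcongr
        exact (norm_sub_le_norm_sub_add_norm_sub _ _ _).trans
          ((add_le_add weights unweighted).trans_eq (add_assoc _ _ _).symm)
    _ = C / L + K * δ N := by field_simp

/-- If `δ_N ∈ (0,1]`, `δ_N → 0` and `Nδ_N → ∞`, then
`∑_{j=1}^N (Ψ_N(j)/j) {jδ_N}(1 − {jδ_N}) ∼ (1/6) log(Nδ_N)`. -/
theorem stmt_11 (θ : ℝ) (hθ : 0 < θ) (δ : ℕ → ℝ)
    (hδ0 : ∀ N, 1 ≤ N → 0 < δ N) (hδ1 : ∀ N, 1 ≤ N → δ N ≤ 1)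
    (hlim0 : Tendsto δ atTop (nhds 0))
    (hliminf : Tendsto (fun N : ℕ => (N : ℝ) * δ N) atTop atTop) :
    Tendsto
      (fun N : ℕ =>
        (∑ j ∈ Finset.Icc 1 N,
          Psi θ N j / (j : ℝ) *
            (Int.fract ((j : ℝ) * δ N) * (1 - Int.fract ((j : ℝ) * δ N))))
        / Real.log ((N : ℝ) * δ N))
      atTop (nhds (1 / 6)) := by
  simpa only [integral_fract_mul_one_sub_fract, smul_eq_mul, inv_mul_eq_div] using
    stmt_11_general hθ lipschitzWith_fract_mul_one_sub_fract
      (fun x ↦ by simp only [Int.fract_add_one]) (by simp) hlim0 hliminf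
end
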